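/- Fix ω with 0 ≤ ω < 1 and let {τ_m}_{m≥1} be a sequence of real numbers with 0 ≤ τ_m < 1 for all m and lim_{m→∞} m·τ_m = +∞. Then there exists M ∈ ℕ such that for all integers m ≥ M, the sign of the derivative ∂_z ₁φ₁(0;ω;q,z) at z = q^{−m+τ_m} equals (−1)^m, i.e., (−1)^m · ∂_z ₁φ₁(0;ω;q,z)|_{z=q^{−m+τ_m}} > 0. -/

import Mathlib

/-!
Write `b k = (-1)^k q^(k(k-1)/2) / (q;q)_k`, `G z = ∑ b k z^k` (which is `(z;q)_∞`) and
`H z = z G'(z) = ∑ k b k z^k`. The coefficients of `₁φ₁(0;ω;q,·)` are `b k / (ω;q)_k`, and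
`1 / (ω;q)_k` converges to a limit `W > 0` with error `O(q^k)`. Hence
`z ∂_z ₁φ₁ = W H(z) + Err`, where `|Err| ≤ C ∑ k q^(k(k-1)/2) (q z)^k`.

At `z = x_m = q^(-m) y` with `y = q^τ ∈ [q, 1]`, both parts are compared with
`E_m = x_1 x_2 ⋯ x_m = q^(-m(m+1)/2) y^m`.

* Completing the square in the exponent gives `|Err| ≤ C E_m q^(m/2)` (`term_bound`).
* The functional equations `G z = (1 - z) G (q z)` and `H z = -z G (q z) + (1 - z) H (q z)`
  (`qG_eq`, `qH_eq`) become recursions along `x_1, x_2, …`. With `u_m = (-1)^m G(x_m) / E_m` and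
  `v_m = (-1)^m H(x_m) / E_m` they yield `v_m ≥ p (v_1 + (m - 1) u_1)` with `p > 0` independent
  of `m` (`recursion_bound`). Here
  `v_1 + (m - 1) u_1` is a positive multiple of `(y/q - 1) ((m - 1) G y + H y) + (y/q) G y`.
  On `[q, 1]` one has `G y ≥ c (1 - y)` and `H` is bounded, and `m τ_m → ∞` forces
  `m (1 - y) → ∞`; so the expression is bounded below by a positive constant (`main_bound`).

So `(-1)^m W H(x_m)` eventually dominates `|Err|`.
-/

open Filter

/-- The finite q-shifted factorial `(a;q)_n`. -/
noncomputable def qPoch (a q : ℝ) : ℕ → ℝ := fun n => ∏ j ∈ Finset.range n, (1 - a * q ^ j)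

/-- The basic hypergeometric function `₁φ₁(0;ω;q,z)`. -/
noncomputable def phi11 (ω q z : ℝ) : ℝ :=
  ∑' k : ℕ, ((-1 : ℝ) ^ k * q ^ (k * (k - 1) / 2) * z ^ k / (qPoch ω q k * qPoch q q k))

/-! ### Finite q-shifted factorials -/

lemma qPoch_succ (a q : ℝ) (n : ℕ) : qPoch a q (n + 1) = qPoch a q n * (1 - a * q ^ n) := by
  simp [qPoch, Finset.prod_range_succ]

lemma mul_pow_le_self {a q : ℝ} (ha : 0 ≤ a) (hq0 : 0 < q) (hq1 : q < 1) (j : ℕ) :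
    a * q ^ j ≤ a :=
  mul_le_of_le_one_right ha (pow_le_one₀ hq0.le hq1.le)

lemma qPoch_lower {a q : ℝ} (ha : 0 ≤ a) (ha1 : a < 1) (hq0 : 0 < q) (hq1 : q < 1) :
    ∃ p : ℝ, 0 < p ∧ ∀ n, p ≤ qPoch a q n := by
  refine ⟨Real.exp (-((1 - q)⁻¹ / (1 - a))), Real.exp_pos _, fun n => ?_⟩
  have h1 : ∀ j : ℕ, Real.exp (-(q ^ j / (1 - a))) ≤ 1 - a * q ^ j := by
    intro j
    have hj := mul_pow_le_self ha hq0 hq1 j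
    have hpos : 0 < 1 - a * q ^ j := by linarith
    rw [← Real.le_log_iff_exp_le hpos]
    refine le_trans ?_ (Real.one_sub_inv_le_log_of_pos hpos)
    have : (1 - a * q ^ j)⁻¹ ≤ (1 - a)⁻¹ := by gcongr
    have e : 1 - (1 - a * q ^ j)⁻¹ = -(a * q ^ j * (1 - a * q ^ j)⁻¹) := by field_simp; ring
    rw [e, div_eq_mul_inv]
    have hqj : 0 < q ^ j := by positivity
    have : a * q ^ j * (1 - a * q ^ j)⁻¹ ≤ q ^ j * (1 - a)⁻¹ := by
      gcongr
      nlinarith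
    linarith
  calc Real.exp (-((1 - q)⁻¹ / (1 - a)))
      ≤ Real.exp (∑ j ∈ Finset.range n, -(q ^ j / (1 - a))) := by
        apply Real.exp_le_exp.2
        rw [Finset.sum_neg_distrib, ← Finset.sum_div]
        apply neg_le_neg
        have : 0 < 1 - a := by linarith
        gcongr
        rw [← tsum_geometric_of_lt_one hq0.le hq1]
        exact (summable_geometric_of_lt_one hq0.le hq1).sum_le_tsum _ (fun i _ => by positivity)
    _ = ∏ j ∈ Finset.range n, Real.exp (-(q ^ j / (1 - a))) := Real.exp_sum _ _
    _ ≤ qPoch a q n := Finset.prod_le_prod (fun _ _ => (Real.exp_pos _).le) (fun j _ => h1 j)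

lemma qPoch_le_one {a q : ℝ} (ha : 0 ≤ a) (ha1 : a < 1) (hq0 : 0 < q) (hq1 : q < 1) (n : ℕ) :
    qPoch a q n ≤ 1 := by
  apply Finset.prod_le_one
  · intro j _
    have := mul_pow_le_self ha hq0 hq1 j
    linarith
  · intro j _
    have : 0 ≤ a * q ^ j := by positivity
    linarith

/-- `1 / (ω;q)_k` converges geometrically to a positive limit. -/
lemma inv_qPoch_limit {ω q : ℝ} (ha : 0 ≤ ω) (ha1 : ω < 1) (hq0 : 0 < q) (hq1 : q < 1) :
    ∃ W C : ℝ, 0 < W ∧ 0 < C ∧ ∀ k, |(qPoch ω q k)⁻¹ - W| ≤ C * q ^ k := by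
  obtain ⟨p, hp, hpl⟩ := qPoch_lower ha ha1 hq0 hq1
  have hstep : ∀ n, dist (qPoch ω q n)⁻¹ (qPoch ω q (n + 1))⁻¹ ≤ p⁻¹ * q ^ n := by
    intro n
    have h0 : 0 < qPoch ω q n := hp.trans_le (hpl n)
    have h1 : 0 < qPoch ω q (n + 1) := hp.trans_le (hpl _)
    have hl := hpl (n + 1)
    have hf : 0 < 1 - ω * q ^ n := by
      have := mul_pow_le_self ha hq0 hq1 n
      linarith
    have e : (qPoch ω q n)⁻¹ - (qPoch ω q (n + 1))⁻¹ = -((qPoch ω q (n + 1))⁻¹ * (ω * q ^ n)) := by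
      rw [qPoch_succ]
      field_simp
      ring
    have hqn : 0 < q ^ n := by positivity
    rw [Real.dist_eq, e, abs_neg, abs_of_nonneg (by positivity)]
    gcongr
    nlinarith
  obtain ⟨W, hW⟩ := cauchySeq_tendsto_of_complete (cauchySeq_of_le_geometric q p⁻¹ hq1 hstep)
  refine ⟨W, p⁻¹ / (1 - q), ?_, ?_, ?_⟩
  · have : 1 ≤ W := by
      refine ge_of_tendsto' hW fun n => ?_
      exact (one_le_inv₀ (hp.trans_le (hpl n))).2 (qPoch_le_one ha ha1 hq0 hq1 n)
    linarith
  · have : 0 < 1 - q := by linarith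
    positivity
  · intro k
    have := dist_le_of_le_geometric_of_tendsto q p⁻¹ hq1 hstep hW k
    rw [Real.dist_eq] at this
    rw [div_mul_eq_mul_div]
    exact this

/-! ### Power series with coefficients of order `q^(k(k-1)/2)` -/

lemma tri_succ (k : ℕ) : (k + 1) * (k + 1 - 1) / 2 = k * (k - 1) / 2 + k := by
  rw [← Nat.choose_two_right, ← Nat.choose_two_right, Nat.choose_succ_succ' k 1]
  simp [add_comm]

lemma summable_tri {q : ℝ} (hq0 : 0 < q) (hq1 : q < 1) {R : ℝ} (hR : 0 < R) :
    Summable fun k : ℕ => ((k : ℝ) + 1) * q ^ (k * (k - 1) / 2) * R ^ k := by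
  have hpos : ∀ k : ℕ, 0 < ((k : ℝ) + 1) * q ^ (k * (k - 1) / 2) * R ^ k := fun k => by positivity
  refine summable_of_ratio_test_tendsto_lt_one (l := 0) one_pos
    (Eventually.of_forall fun k => (hpos k).ne') ?_
  have h1 : Tendsto (fun k : ℕ => (2 * R) * q ^ k) atTop (nhds 0) := by
    simpa using (tendsto_pow_atTop_nhds_zero_of_lt_one hq0.le hq1).const_mul (2 * R)
  refine squeeze_zero (fun k => by positivity) (fun k => ?_) h1
  rw [Real.norm_of_nonneg (hpos _).le, Real.norm_of_nonneg (hpos _).le, div_le_iff₀ (hpos k),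
    tri_succ]
  push_cast
  have : (k : ℝ) + 1 + 1 ≤ 2 * (k + 1) := by
    have : (0 : ℝ) ≤ k := by positivity
    linarith
  calc ((k : ℝ) + 1 + 1) * q ^ (k * (k - 1) / 2 + k) * R ^ (k + 1)
      ≤ (2 * (k + 1)) * q ^ (k * (k - 1) / 2 + k) * R ^ (k + 1) := by gcongr
    _ = _ := by ring

section Series

variable {q C : ℝ} {c : ℕ → ℝ}

lemma summable_ser_deriv (hq0 : 0 < q) (hq1 : q < 1)
    (hc : ∀ k, |c k| ≤ C * q ^ (k * (k - 1) / 2)) (z : ℝ) :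
    Summable fun k : ℕ => (k : ℝ) * c k * z ^ k := by
  refine Summable.of_norm_bounded
    ((summable_tri hq0 hq1 (R := |z| + 1) (by positivity)).mul_left C) fun k => ?_
  rw [norm_mul, norm_mul, norm_pow, Real.norm_eq_abs, Real.norm_eq_abs, Real.norm_eq_abs,
    Nat.abs_cast]
  have hC := (abs_nonneg _).trans (hc k)
  calc (k : ℝ) * |c k| * |z| ^ k
      ≤ (k + 1) * (C * q ^ (k * (k - 1) / 2)) * (|z| + 1) ^ k := by
        gcongr
        · linarith
        · exact hc k
        · linarith
    _ = _ := by ring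

lemma summable_ser (hq0 : 0 < q) (hq1 : q < 1)
    (hc : ∀ k, |c k| ≤ C * q ^ (k * (k - 1) / 2)) (z : ℝ) :
    Summable fun k : ℕ => c k * z ^ k := by
  refine Summable.of_norm_bounded
    ((summable_tri hq0 hq1 (R := |z| + 1) (by positivity)).mul_left C) fun k => ?_
  rw [norm_mul, norm_pow, Real.norm_eq_abs, Real.norm_eq_abs]
  have hC := (abs_nonneg _).trans (hc k)
  calc |c k| * |z| ^ k
      ≤ (C * q ^ (k * (k - 1) / 2)) * (|z| + 1) ^ k := by
        gcongr
        · exact hc k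
        · linarith
    _ ≤ (k + 1) * ((C * q ^ (k * (k - 1) / 2)) * (|z| + 1) ^ k) := by
        apply le_mul_of_one_le_left (by positivity)
        have : (0 : ℝ) ≤ k := by positivity
        linarith
    _ = _ := by ring

lemma hasDerivAt_ser (hq0 : 0 < q) (hq1 : q < 1)
    (hc : ∀ k, |c k| ≤ C * q ^ (k * (k - 1) / 2)) (z : ℝ) :
    HasDerivAt (fun z => ∑' k : ℕ, c k * z ^ k) (∑' k : ℕ, c k * ((k : ℝ) * z ^ (k - 1))) z := by
  set R := |z| + 1 with hR
  have hR1 : 1 ≤ R := by rw [hR]; linarith [abs_nonneg z]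
  refine hasDerivAt_tsum_of_isPreconnected (t := Metric.ball 0 R) (y₀ := z) (y := z)
    (g := fun k z => c k * z ^ k) (g' := fun k z => c k * ((k : ℝ) * z ^ (k - 1)))
    ((summable_tri hq0 hq1 (R := R) (by positivity)).mul_left C)
    Metric.isOpen_ball (convex_ball (0 : ℝ) R).isPreconnected ?_ ?_ ?_
    (summable_ser hq0 hq1 hc z) ?_
  · intro n y _
    exact (hasDerivAt_pow n y).const_mul _
  · intro k y hy
    rw [mem_ball_zero_iff, Real.norm_eq_abs] at hy
    rw [norm_mul, norm_mul, norm_pow, Real.norm_eq_abs, Real.norm_eq_abs, Real.norm_eq_abs,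
      Nat.abs_cast]
    have hC := (abs_nonneg _).trans (hc k)
    have hk : |y| ^ (k - 1) ≤ R ^ k :=
      (pow_le_pow_left₀ (abs_nonneg y) hy.le _).trans (pow_le_pow_right₀ hR1 (Nat.sub_le _ _))
    calc |c k| * ((k : ℝ) * |y| ^ (k - 1))
        ≤ (C * q ^ (k * (k - 1) / 2)) * ((k + 1) * R ^ k) := by
          gcongr
          · exact hc k
          · linarith
      _ = _ := by ring
  · simp [hR]
  · simp [hR]

lemma mul_deriv_ser (z : ℝ) :
    z * ∑' k : ℕ, c k * ((k : ℝ) * z ^ (k - 1)) = ∑' k : ℕ, (k : ℝ) * c k * z ^ k := by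
  rw [← tsum_mul_left]
  refine tsum_congr fun k => ?_
  cases k with
  | zero => simp
  | succ k => simp only [Nat.add_sub_cancel]; ring

end Series

/-! ### The function `(z;q)_∞` and its Euler derivative -/

/-- The coefficients `(-1)^k q^(k(k-1)/2) / (q;q)_k` of Euler's expansion of `(z;q)_∞`. -/
noncomputable def qb (q : ℝ) (k : ℕ) : ℝ := (-1 : ℝ) ^ k * q ^ (k * (k - 1) / 2) / qPoch q q k

/-- `(z;q)_∞`, defined through its power series. -/
noncomputable def qG (q z : ℝ) : ℝ := ∑' k : ℕ, qb q k * z ^ k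

/-- The Euler derivative `z G'(z)` of `G = qG q`, as a power series. -/
noncomputable def qH (q z : ℝ) : ℝ := ∑' k : ℕ, (k : ℝ) * qb q k * z ^ k

section Fixed

variable {q : ℝ}

lemma qb_bound (hq0 : 0 < q) (hq1 : q < 1) :
    ∃ B : ℝ, 0 < B ∧ ∀ k, |qb q k| ≤ B * q ^ (k * (k - 1) / 2) := by
  obtain ⟨p, hp, hpl⟩ := qPoch_lower hq0.le hq1 hq0 hq1
  refine ⟨p⁻¹, by positivity, fun k => ?_⟩
  have h0 := hp.trans_le (hpl k)
  rw [qb, abs_div, abs_mul, abs_pow, abs_neg, abs_one, one_pow, one_mul, abs_of_pos h0,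
    abs_of_pos (by positivity), div_eq_inv_mul]
  gcongr
  exact hpl k

lemma qb_succ (hq0 : 0 < q) (hq1 : q < 1) (k : ℕ) :
    qb q (k + 1) * (1 - q ^ (k + 1)) = -(q ^ k * qb q k) := by
  obtain ⟨p, hp, hpl⟩ := qPoch_lower hq0.le hq1 hq0 hq1
  have h0 := (hp.trans_le (hpl k)).ne'
  have h1 : 1 - q ^ (k + 1) ≠ 0 := by
    have : q ^ (k + 1) < 1 := pow_lt_one₀ hq0.le hq1 (by omega)
    linarith
  have h2 : qPoch q q (k + 1) = qPoch q q k * (1 - q ^ (k + 1)) := by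
    rw [qPoch_succ]; ring
  rw [qb, qb, h2, tri_succ]
  field_simp
  ring

lemma qG_eq (hq0 : 0 < q) (hq1 : q < 1) (z : ℝ) : qG q z = (1 - z) * qG q (q * z) := by
  obtain ⟨B, -, hB⟩ := qb_bound hq0 hq1
  have s1 := summable_ser hq0 hq1 hB z
  have s2 := summable_ser hq0 hq1 hB (q * z)
  have key : qG q z - qG q (q * z) = -z * qG q (q * z) := by
    unfold qG
    rw [← s1.tsum_sub s2, (s1.sub s2).tsum_eq_zero_add, ← tsum_mul_left]
    simp only [pow_zero, sub_self, zero_add]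
    refine tsum_congr fun k => ?_
    have := qb_succ hq0 hq1 k
    rw [mul_pow, mul_pow]
    linear_combination z ^ (k + 1) * this
  linear_combination key

lemma qG_hasDerivAt (hq0 : 0 < q) (hq1 : q < 1) (z : ℝ) :
    ∃ d, HasDerivAt (qG q) d z ∧ z * d = qH q z := by
  obtain ⟨B, -, hB⟩ := qb_bound hq0 hq1
  exact ⟨_, hasDerivAt_ser hq0 hq1 hB z, mul_deriv_ser z⟩

lemma qG_continuous (hq0 : 0 < q) (hq1 : q < 1) : Continuous (qG q) :=
  continuous_iff_continuousAt.2 fun z =>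
    let ⟨_, h, _⟩ := qG_hasDerivAt hq0 hq1 z
    h.continuousAt

lemma qH_eq (hq0 : 0 < q) (hq1 : q < 1) (z : ℝ) :
    qH q z = -z * qG q (q * z) + (1 - z) * qH q (q * z) := by
  obtain ⟨d, hd, e⟩ := qG_hasDerivAt hq0 hq1 z
  obtain ⟨d', hd', e'⟩ := qG_hasDerivAt hq0 hq1 (q * z)
  have h1 : HasDerivAt (fun z => qG q (q * z)) (d' * q) z := by
    have : HasDerivAt (fun z : ℝ => q * z) q z := by
      simpa using (hasDerivAt_id z).const_mul q
    exact hd'.comp z this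
  have h2 : HasDerivAt (fun z : ℝ => 1 - z) (-1) z := by
    simpa using (hasDerivAt_id z).const_sub 1
  have h3 := h2.mul h1
  have h4 : qG q = (fun z : ℝ => 1 - z) * fun z => qG q (q * z) := funext (qG_eq hq0 hq1)
  rw [← h4] at h3
  have := hd.unique h3
  rw [← e, ← e', this]
  ring

lemma qG_iter (hq0 : 0 < q) (hq1 : q < 1) (z : ℝ) (n : ℕ) :
    qG q z = qPoch z q n * qG q (q ^ n * z) := by
  induction n with
  | zero => simp [qPoch]
  | succ n ih =>
    rw [ih, qPoch_succ, qG_eq hq0 hq1 (q ^ n * z), pow_succ']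
    ring_nf

lemma qG_pos (hq0 : 0 < q) (hq1 : q < 1) {z : ℝ} (h0 : 0 ≤ z) (h1 : z < 1) : 0 < qG q z := by
  have hG0 : qG q 0 = 1 := by
    unfold qG
    rw [tsum_eq_single 0]
    · simp [qb, qPoch]
    · intro k hk; simp [hk]
  have ht : Tendsto (fun n : ℕ => qG q (q ^ n * z)) atTop (nhds 1) := by
    rw [← hG0]
    refine ((qG_continuous hq0 hq1).tendsto 0).comp ?_
    simpa using (tendsto_pow_atTop_nhds_zero_of_lt_one hq0.le hq1).mul_const z
  obtain ⟨n, hn⟩ := (ht.eventually (lt_mem_nhds one_pos)).exists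
  obtain ⟨p, hp, hpl⟩ := qPoch_lower h0 h1 hq0 hq1
  rw [qG_iter hq0 hq1 z n]
  exact mul_pos (hp.trans_le (hpl n)) hn

lemma qG_lower (hq0 : 0 < q) (hq1 : q < 1) :
    ∃ c : ℝ, 0 < c ∧ ∀ y, 0 ≤ y → y ≤ 1 → c * (1 - y) ≤ qG q y := by
  obtain ⟨y0, hy0, hmin⟩ := (isCompact_Icc (a := (0 : ℝ)) (b := q)).exists_isMinOn
    ⟨0, by simp [hq0.le]⟩ (qG_continuous hq0 hq1).continuousOn
  refine ⟨qG q y0, qG_pos hq0 hq1 hy0.1 (hy0.2.trans_lt hq1), fun y h0 h1 => ?_⟩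
  have : qG q y0 ≤ qG q (q * y) := hmin ⟨by positivity, by nlinarith⟩
  rw [qG_eq hq0 hq1 y, mul_comm]
  have : 0 ≤ 1 - y := by linarith
  gcongr

lemma qH_bounded (hq0 : 0 < q) (hq1 : q < 1) :
    ∃ C : ℝ, ∀ y, 0 ≤ y → y ≤ 1 → -C ≤ qH q y := by
  obtain ⟨B, -, hB⟩ := qb_bound hq0 hq1
  have hB' : ∀ k, |(|qb q k|)| ≤ B * q ^ (k * (k - 1) / 2) := fun k => by
    rw [abs_abs]; exact hB k
  have s := summable_ser_deriv hq0 hq1 hB' 1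
  refine ⟨∑' k : ℕ, (k : ℝ) * |qb q k| * 1 ^ k, fun y h0 h1 => ?_⟩
  rw [qH, ← tsum_neg]
  refine s.neg.tsum_le_tsum (fun k => ?_) (summable_ser_deriv hq0 hq1 hB y)
  have e : |(k : ℝ) * qb q k * y ^ k| ≤ (k : ℝ) * |qb q k| * 1 ^ k := by
    rw [abs_mul, abs_mul, Nat.abs_cast, abs_pow, abs_of_nonneg h0]
    gcongr
  exact (abs_le.1 e).1

/-! ### Growth along `x_m = q^(-m) y` -/

/-- `x_1 x_2 ⋯ x_m` with `x_i = y / q^i`. -/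
noncomputable def qE (q y : ℝ) (m : ℕ) : ℝ := ∏ i ∈ Finset.range m, (y / q ^ (i + 1))

lemma qE_succ (y : ℝ) (m : ℕ) : qE q y (m + 1) = qE q y m * (y / q ^ (m + 1)) := by
  rw [qE, Finset.prod_range_succ, qE]

lemma qE_pos (hq0 : 0 < q) {y : ℝ} (hy : 0 < y) (m : ℕ) : 0 < qE q y m :=
  Finset.prod_pos fun _ _ => by positivity

/-- The recursion for `(-1)^m G(x_m)` and `(-1)^m H(x_m)` started at `m = 1`, with the `n`-step
growth factor `P` compared with `qE`. It does not start at `m = 0` because `x_1 - 1` can be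
arbitrarily small. -/
lemma recursion_bound (hq0 : 0 < q) (hq1 : q < 1) {y : ℝ} (hy : q ≤ y) (hy1 : y ≤ 1) (n : ℕ) :
    ∃ P : ℝ, qPoch q q n * qE q y (n + 1) ≤ P * (y / q) ∧
      (-1) ^ (n + 1) * qG q (y / q ^ (n + 1)) = P * ((y / q - 1) * qG q y) ∧
      P * (y / q * qG q y + (y / q - 1) * qH q y + n * ((y / q - 1) * qG q y))
        ≤ (-1) ^ (n + 1) * qH q (y / q ^ (n + 1)) := by
  have hy0 : 0 < y := hq0.trans_le hy
  obtain ⟨c, hc, hcl⟩ := qG_lower hq0 hq1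
  have hGy : 0 ≤ qG q y := (mul_nonneg hc.le (by linarith)).trans (hcl y hy0.le hy1)
  have hyq : 0 ≤ y / q - 1 := by
    rw [sub_nonneg, le_div_iff₀ hq0]; linarith
  induction n with
  | zero =>
    have e : q * (y / q ^ 1) = y := by field_simp
    refine ⟨1, ?_, ?_, ?_⟩
    · simp [qPoch, qE]
    · rw [zero_add, qG_eq hq0 hq1 (y / q ^ 1), e]; ring
    · rw [zero_add, qH_eq hq0 hq1 (y / q ^ 1), e]
      apply le_of_eq
      push_cast
      ring
  | succ n ih =>
    obtain ⟨P, h1, h2, h3⟩ := ih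
    set x := y / q ^ (n + 1 + 1) with hx
    have e : q * x = y / q ^ (n + 1) := by rw [hx]; field_simp; ring
    have hx0 : 0 < x := by positivity
    obtain ⟨p, hp, hpl⟩ := qPoch_lower hq0.le hq1 hq0 hq1
    have hpn := hp.trans_le (hpl n)
    have hP : 0 ≤ P := by
      have : 0 < P * (y / q) := (mul_pos hpn (qE_pos hq0 hy0 _)).trans_le h1
      exact (pos_of_mul_pos_left this (by positivity)).le
    -- `x - 1 ≥ (1 - q^(n+1)) x`, that is `q^(n+1) x = y / q ≥ 1`
    have hx1 : (1 - q * q ^ n) * x ≤ x - 1 := by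
      have : q * q ^ n * x = y / q := by rw [hx]; field_simp; ring
      linarith
    have hqn : 0 < 1 - q * q ^ n := by
      have := mul_pow_le_self hq0.le hq0 hq1 n
      linarith
    have hxx : 0 ≤ x - 1 := le_trans (by positivity) hx1
    refine ⟨P * (x - 1), ?_, ?_, ?_⟩
    · rw [qPoch_succ, qE_succ]
      calc qPoch q q n * (1 - q * q ^ n) * (qE q y (n + 1) * x)
          = (qPoch q q n * qE q y (n + 1)) * ((1 - q * q ^ n) * x) := by ring
        _ ≤ (P * (y / q)) * (x - 1) := by gcongr
        _ = _ := by ring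
    · rw [qG_eq hq0 hq1 x, e]
      linear_combination (x - 1) * h2
    · rw [qH_eq hq0 hq1 x, e]
      set g := qG q (y / q ^ (n + 1))
      set h := qH q (y / q ^ (n + 1))
      have hg : 0 ≤ (-1) ^ (n + 1) * g := by rw [h2]; positivity
      have h3' := mul_le_mul_of_nonneg_left h3 hxx
      push_cast
      have : (-1 : ℝ) ^ (n + 1 + 1) * (-x * g + (1 - x) * h)
          = x * ((-1) ^ (n + 1) * g) + (x - 1) * ((-1) ^ (n + 1) * h) := by ring
      rw [this]
      have : (x - 1) * ((-1) ^ (n + 1) * g) ≤ x * ((-1) ^ (n + 1) * g) := by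
        gcongr; linarith
      rw [h2] at this hg ⊢
      nlinarith

/-- `(-1)^m H(x_m)` is at least a constant multiple of `E_m` as soon as `m (1 - y)` is large. -/
lemma main_bound (hq0 : 0 < q) (hq1 : q < 1) :
    ∃ c K : ℝ, 0 < c ∧ ∀ y, q ≤ y → y ≤ 1 → ∀ m : ℕ, 1 ≤ m → K ≤ m * (1 - y) →
      c * qE q y m ≤ (-1) ^ m * qH q (y / q ^ m) := by
  obtain ⟨c, hc, hcl⟩ := qG_lower hq0 hq1
  obtain ⟨D, hD⟩ := qH_bounded hq0 hq1
  obtain ⟨p, hp, hpl⟩ := qPoch_lower hq0.le hq1 hq0 hq1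
  set c1 := min (c * (1 - q)) (1 / q - 1) with hc1
  have hq1' : 0 < 1 / q - 1 := by
    rw [sub_pos, lt_div_iff₀ hq0]; linarith
  have hc1pos : 0 < c1 := lt_min (mul_pos hc (by linarith)) hq1'
  refine ⟨p * q * c1, (D + 1) / c + 1, by positivity, ?_⟩
  intro y hy hy1 m hm hK
  obtain ⟨n, rfl⟩ : ∃ n, m = n + 1 := ⟨m - 1, by omega⟩
  have hy0 : 0 < y := hq0.trans_le hy
  obtain ⟨P, h1, -, h3⟩ := recursion_bound hq0 hq1 hy hy1 n
  have hE := qE_pos hq0 hy0 (n + 1)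
  have hpE : p * qE q y (n + 1) ≤ P * (y / q) := le_trans (by gcongr; exact hpl n) h1
  have hP : 0 < P := pos_of_mul_pos_left ((mul_pos hp hE).trans_le hpE) (by positivity)
  have hPq : p * q * qE q y (n + 1) ≤ P := by
    have e : P * (y / q) * q = P * y := by field_simp
    have : P * y ≤ P := by nlinarith
    nlinarith
  have hGy := hcl y hy0.le hy1
  have hHy := hD y hy0.le hy1
  have hyq : 0 ≤ y / q - 1 := by
    rw [sub_nonneg, le_div_iff₀ hq0]; linarith
  push_cast at hK
  have hn : (D + 1) / c ≤ n * (1 - y) := by nlinarith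
  have hn' : 1 ≤ n * qG q y + qH q y := by
    rw [div_le_iff₀ hc] at hn
    have : (n : ℝ) * (c * (1 - y)) ≤ n * qG q y := by gcongr
    nlinarith
  -- the minorant is affine in `y`, with values `c (1 - q)` and `1 / q - 1` at the end points
  have hlow : c1 ≤ (y / q - 1) * 1 + 1 * (c * (1 - y)) := by
    have a1 : c1 ≤ c * (1 - q) := min_le_left _ _
    have a2 : c1 ≤ 1 / q - 1 := min_le_right _ _
    have e : (y / q - 1) * 1 + 1 * (c * (1 - y))
        = ((1 - y) / (1 - q)) * (c * (1 - q)) + ((y - q) / (1 - q)) * (1 / q - 1) := by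
      have : 1 - q ≠ 0 := by linarith
      field_simp
      ring
    have b1 : 0 ≤ (1 - y) / (1 - q) := div_nonneg (by linarith) (by linarith)
    have b2 : 0 ≤ (y - q) / (1 - q) := div_nonneg (by linarith) (by linarith)
    have b3 : (1 - y) / (1 - q) + (y - q) / (1 - q) = 1 := by
      have : 1 - q ≠ 0 := by linarith
      field_simp
      ring
    rw [e]
    calc c1 = ((1 - y) / (1 - q)) * c1 + ((y - q) / (1 - q)) * c1 := by rw [← add_mul, b3, one_mul]
      _ ≤ _ := by gcongr
  have hlow2 : c1 ≤ y / q * qG q y + (y / q - 1) * qH q y + n * ((y / q - 1) * qG q y) := by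
    have a1 : (y / q - 1) * 1 ≤ (y / q - 1) * (n * qG q y + qH q y) := by gcongr
    have a2 : 1 * (c * (1 - y)) ≤ (y / q) * qG q y := by
      have : 0 ≤ c * (1 - y) := mul_nonneg hc.le (by linarith)
      gcongr
      linarith
    nlinarith
  calc p * q * c1 * qE q y (n + 1) = (p * q * qE q y (n + 1)) * c1 := by ring
    _ ≤ P * c1 := by gcongr
    _ ≤ _ := (mul_le_mul_of_nonneg_left hlow2 hP.le).trans h3

end Fixed

/-! ### The error term -/

/-- `q^(m(m+1)/2) E_m = y^m`, with `q = r^2` to clear the halves. -/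
lemma qE_closed {r y : ℝ} (hr : 0 < r) (m : ℕ) : qE (r ^ 2) y m * r ^ (m * (m + 1)) = y ^ m := by
  induction m with
  | zero => simp [qE]
  | succ m ih =>
    rw [qE_succ, pow_succ y, ← ih]
    have : r ^ ((m + 1) * (m + 1 + 1)) = r ^ (m * (m + 1)) * (r ^ 2) ^ (m + 1) := by
      rw [← pow_mul, ← pow_add]; congr 1; ring
    rw [this]
    field_simp

lemma tri_pow (r : ℝ) (k : ℕ) : (r ^ 2) ^ (k * (k - 1) / 2) * r ^ k = r ^ (k * k) := by
  rw [← pow_mul, ← pow_add]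
  congr 1
  rw [Nat.mul_div_cancel' (Nat.even_mul_pred_self k).two_dvd]
  cases k with
  | zero => rfl
  | succ k => simp; ring

/-- Completing the square: the ratio of the two sides is `r^((k - m)^2 + 1) y^(k - m)`. For `k ≥ m`
this is at most `1` since `y ≤ 1`; for `k < m` the bound `r^2 ≤ y` makes it at most
`r^((m - k - 1)^2)`. -/
lemma term_bound {r y : ℝ} (hr : 0 < r) (hr1 : r < 1) (hy : r ^ 2 ≤ y) (hy1 : y ≤ 1) (m k : ℕ) :
    r * ((r ^ 2) ^ (k * (k - 1) / 2) * (r ^ 2 * (y / (r ^ 2) ^ m)) ^ k)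
      ≤ qE (r ^ 2) y m * (r ^ m * r ^ k) := by
  have hy0 : 0 < y := lt_of_lt_of_le (by positivity) hy
  have key : r ^ (k * k + k + m * m + m + 1) * y ^ k ≤ r ^ (m + k + 2 * m * k) * y ^ m := by
    rcases le_total m k with h | h
    · have h1 : y ^ k ≤ y ^ m := pow_le_pow_of_le_one hy0.le hy1 h
      have h2 : r ^ (k * k + k + m * m + m + 1) ≤ r ^ (m + k + 2 * m * k) :=
        pow_le_pow_of_le_one hr.le hr1.le (by nlinarith [sq_nonneg ((m : ℤ) - k)])
      gcongr
    · obtain ⟨i, rfl⟩ := Nat.exists_eq_add_of_le h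
      have h1 : (r ^ 2) ^ i * y ^ k ≤ y ^ (k + i) := by
        rw [pow_add, mul_comm]
        gcongr
      have hexp : k + i + k + 2 * (k + i) * k + 2 * i
          ≤ k * k + k + (k + i) * (k + i) + (k + i) + 1 := by
        have : 2 * i ≤ i * i + 1 := by
          zify
          nlinarith [sq_nonneg ((i : ℤ) - 1)]
        nlinarith
      calc r ^ (k * k + k + (k + i) * (k + i) + (k + i) + 1) * y ^ k
          ≤ r ^ (k + i + k + 2 * (k + i) * k + 2 * i) * y ^ k := by
            gcongr ?_ * _
            exact pow_le_pow_of_le_one hr.le hr1.le hexp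
        _ = r ^ (k + i + k + 2 * (k + i) * k) * ((r ^ 2) ^ i * y ^ k) := by
            rw [← pow_mul, pow_add _ _ (2 * i)]; ring
        _ ≤ _ := by gcongr
  have hM : 0 < r ^ (2 * m * k + m * (m + 1)) := by positivity
  refine le_of_mul_le_mul_right ?_ hM
  have e1 : r * ((r ^ 2) ^ (k * (k - 1) / 2) * (r ^ 2 * (y / (r ^ 2) ^ m)) ^ k)
      * r ^ (2 * m * k + m * (m + 1)) = r ^ (k * k + k + m * m + m + 1) * y ^ k := by
    have a : (r ^ 2 * (y / (r ^ 2) ^ m)) ^ k * r ^ (2 * m * k) = r ^ k * r ^ k * y ^ k := by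
      rw [pow_mul r (2 * m) k, ← mul_pow, ← mul_pow, ← mul_pow, pow_mul r 2 m]
      congr 1
      field_simp
    calc _ = r * ((r ^ 2) ^ (k * (k - 1) / 2)) * r ^ (m * (m + 1))
            * ((r ^ 2 * (y / (r ^ 2) ^ m)) ^ k * r ^ (2 * m * k)) := by rw [pow_add]; ring
      _ = r * (((r ^ 2) ^ (k * (k - 1) / 2)) * r ^ k) * r ^ (m * (m + 1)) * r ^ k * y ^ k := by
          rw [a]; ring
      _ = _ := by rw [tri_pow]; ring
  have e2 : qE (r ^ 2) y m * (r ^ m * r ^ k) * r ^ (2 * m * k + m * (m + 1))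
      = r ^ (m + k + 2 * m * k) * y ^ m := by
    rw [← qE_closed (y := y) hr m]; ring
  rw [e1, e2]
  exact key

/-- `z ∂_z ₁φ₁(0;ω;q,z)` at `z = x_m` differs from `W H(x_m)` by at most `D q^(m/2) E_m`. -/
lemma phi_deriv_approx {q ω : ℝ} (hq0 : 0 < q) (hq1 : q < 1) (hω0 : 0 ≤ ω) (hω1 : ω < 1) :
    ∃ W D : ℝ, 0 < W ∧ 0 < D ∧ ∀ y, q ≤ y → y ≤ 1 → ∀ m : ℕ,
      |y / q ^ m * deriv (fun z => phi11 ω q z) (y / q ^ m) - W * qH q (y / q ^ m)|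
        ≤ D * Real.sqrt q ^ m * qE q y m := by
  obtain ⟨W, C, hW, hC, hWC⟩ := inv_qPoch_limit hω0 hω1 hq0 hq1
  obtain ⟨B, hB, hBl⟩ := qb_bound hq0 hq1
  set r := Real.sqrt q with hr
  have hr0 : 0 < r := Real.sqrt_pos.2 hq0
  have hr2 : r ^ 2 = q := Real.sq_sqrt hq0.le
  have hr1 : r < 1 := by nlinarith
  have hsum : Summable fun k : ℕ => (k : ℝ) * r ^ k := by
    simpa using summable_pow_mul_geometric_of_norm_lt_one 1
      (r := r) (by rwa [Real.norm_of_nonneg hr0.le])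
  set S := ∑' k : ℕ, (k : ℝ) * r ^ k with hS
  have hS0 : 0 ≤ S := tsum_nonneg fun k => by positivity
  refine ⟨W, B * C / r * (S + 1), hW, by positivity, fun y hy hy1 m => ?_⟩
  have hy0 : 0 < y := hq0.trans_le hy
  set x := y / q ^ m with hx
  have hx0 : 0 < x := by positivity
  set c : ℕ → ℝ := fun k => qb q k * (qPoch ω q k)⁻¹ with hc
  have hinv : ∀ k, |(qPoch ω q k)⁻¹| ≤ W + C := fun k => by
    have h1 := hWC k
    have h2 : C * q ^ k ≤ C := mul_le_of_le_one_right hC.le (pow_le_one₀ hq0.le hq1.le)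
    have h3 := abs_sub_abs_le_abs_sub (qPoch ω q k)⁻¹ W
    rw [abs_of_pos hW] at h3
    linarith
  have hcl : ∀ k, |c k| ≤ (B * (W + C)) * q ^ (k * (k - 1) / 2) := fun k => by
    rw [hc, abs_mul]
    calc |qb q k| * |(qPoch ω q k)⁻¹| ≤ (B * q ^ (k * (k - 1) / 2)) * (W + C) := by
          gcongr
          · exact hBl k
          · exact hinv k
      _ = _ := by ring
  have hphi : (fun z => phi11 ω q z) = fun z => ∑' k : ℕ, c k * z ^ k := by
    funext z
    refine tsum_congr fun k => ?_
    simp only [hc, qb, div_eq_mul_inv, mul_inv]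
    ring
  rw [hphi, (hasDerivAt_ser hq0 hq1 hcl x).deriv, mul_deriv_ser, qH, ← tsum_mul_left,
    ← (summable_ser_deriv hq0 hq1 hcl x).tsum_sub
      ((summable_ser_deriv hq0 hq1 hBl x).mul_left W)]
  have hE := qE_pos hq0 hy0 m
  have hterm : ∀ k : ℕ, ‖(k : ℝ) * c k * x ^ k - W * ((k : ℝ) * qb q k * x ^ k)‖
      ≤ (B * C / r * r ^ m * qE q y m) * ((k : ℝ) * r ^ k) := by
    intro k
    have e : (k : ℝ) * c k * x ^ k - W * ((k : ℝ) * qb q k * x ^ k)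
        = k * qb q k * ((qPoch ω q k)⁻¹ - W) * x ^ k := by rw [hc]; ring
    have ht := term_bound hr0 hr1 (hr2.symm ▸ hy) hy1 m k
    rw [hr2, ← hx] at ht
    rw [e, norm_mul, norm_mul, norm_mul, norm_pow, Real.norm_eq_abs, Real.norm_eq_abs,
      Real.norm_eq_abs, Real.norm_eq_abs, Nat.abs_cast, abs_of_pos hx0]
    calc (k : ℝ) * |qb q k| * |(qPoch ω q k)⁻¹ - W| * x ^ k
        ≤ k * (B * q ^ (k * (k - 1) / 2)) * (C * q ^ k) * x ^ k := by
          gcongr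
          · exact hBl k
          · exact hWC k
      _ = B * C / r * k * (r * (q ^ (k * (k - 1) / 2) * (q * x) ^ k)) := by
          rw [mul_pow]; field_simp
      _ ≤ B * C / r * k * (qE q y m * (r ^ m * r ^ k)) := by gcongr
      _ = _ := by ring
  have hfin := tsum_of_norm_bounded ((hsum.hasSum).mul_left (B * C / r * r ^ m * qE q y m)) hterm
  rw [Real.norm_eq_abs] at hfin
  refine hfin.trans ?_
  rw [← hS]
  calc B * C / r * r ^ m * qE q y m * S ≤ B * C / r * r ^ m * qE q y m * (S + 1) := by
        gcongr; linarith
    _ = _ := by ring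

theorem stmt10 (q ω : ℝ) (hq0 : 0 < q) (hq1 : q < 1) (hω0 : 0 ≤ ω) (hω1 : ω < 1)
    (τ : ℕ → ℝ) (hτ : ∀ m, 1 ≤ m → 0 ≤ τ m ∧ τ m < 1)
    (hlim : Tendsto (fun m : ℕ => (m : ℝ) * τ m) atTop atTop) :
    ∃ M : ℕ, ∀ m, M ≤ m →
      0 < (-1 : ℝ) ^ m * deriv (fun z => phi11 ω q z) (q ^ (-(m : ℝ) + τ m)) := by
  obtain ⟨W, D, hW, hD, happ⟩ := phi_deriv_approx hq0 hq1 hω0 hω1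
  obtain ⟨c, K, hc, hmain⟩ := main_bound hq0 hq1
  have hr1 : Real.sqrt q < 1 := by
    rw [Real.sqrt_lt' one_pos]; simpa using hq1
  have h1 : Tendsto (fun m : ℕ => D * Real.sqrt q ^ m) atTop (nhds 0) := by
    simpa using (tendsto_pow_atTop_nhds_zero_of_lt_one (Real.sqrt_nonneg q) hr1).const_mul D
  have ev1 := h1.eventually (gt_mem_nhds (mul_pos hW hc))
  have ev2 := hlim.eventually_ge_atTop (K / (1 - q))
  obtain ⟨M, hM⟩ := eventually_atTop.1 ((ev1.and ev2).and (eventually_ge_atTop 1))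
  refine ⟨M, fun m hm => ?_⟩
  obtain ⟨⟨hA, hB⟩, hm1⟩ := hM m hm
  obtain ⟨ht0, ht1⟩ := hτ m hm1
  set y := q ^ τ m with hy
  have hyq : q ≤ y := by
    simpa using Real.rpow_le_rpow_of_exponent_ge hq0 hq1.le ht1.le
  have hy1 : y ≤ 1 := Real.rpow_le_one hq0.le hq1.le ht0
  have hx : q ^ (-(m : ℝ) + τ m) = y / q ^ m := by
    rw [Real.rpow_add hq0, Real.rpow_neg hq0.le, Real.rpow_natCast, hy]
    field_simp
  -- Bernoulli's inequality: `q^τ ≤ 1 - τ (1 - q)`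
  have hbern : y ≤ 1 + τ m * (q - 1) := by
    have := rpow_one_add_le_one_add_mul_self (s := q - 1) (by linarith) ht0 ht1.le
    simpa using this
  have hK : K ≤ m * (1 - y) := by
    rw [div_le_iff₀ (by linarith)] at hB
    have : (m : ℝ) * (τ m * (1 - q)) ≤ m * (1 - y) := by
      gcongr
      linarith
    linarith
  have hlow := hmain y hyq hy1 m hm1 hK
  have hap := happ y hyq hy1 m
  rw [hx]
  have hy0 : 0 < y := hq0.trans_le hyq
  have hE := qE_pos hq0 hy0 m
  have hx0 : 0 < y / q ^ m := by positivity
  set x := y / q ^ m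
  set d := deriv (fun z => phi11 ω q z) x
  have hsgn : |(-1 : ℝ) ^ m * (x * d - W * qH q x)| ≤ D * Real.sqrt q ^ m * qE q y m := by
    rw [abs_mul, abs_pow, abs_neg, abs_one, one_pow, one_mul]; exact hap
  have h2 := (abs_le.1 hsgn).1
  have h3 := mul_le_mul_of_nonneg_left hlow hW.le
  have h4 := mul_lt_mul_of_pos_right hA hE
  have h5 : 0 < x * ((-1 : ℝ) ^ m * d) := by nlinarith
  exact pos_of_mul_pos_right h5 hx0.le
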